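/- Let (S,T) be modular data on Φ. For every unit j ∈ Φ (S_{j0} = S_{00}), the function b ↦ S_{jb}/S_{0b} is a grading of Φ. Conversely, every grading arises this way: if φ : Φ → ℂ∖{0} satisfies φ(c) = φ(a)·φ(b) whenever N_{ab}^c ≠ 0, then there exists a unique unit j ∈ Φ such that φ(b) = S_{jb}/S_{0b} for all b ∈ Φ. -/

import Mathlib

open scoped BigOperators
open Complex

/-- Modular data on a finite set `Φ` with distinguished element `zero`: a unitary symmetric
matrix `S`, a diagonal matrix `T` of finite order, with the `zero`-row of `S` real and
strictly positive, `S² = (ST)³`, and nonnegative-integer fusion coefficients `N a b c` given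
by Verlinde's formula. -/
structure ModularData (Φ : Type) [Fintype Φ] [DecidableEq Φ] where
  zero : Φ
  S : Matrix Φ Φ ℂ
  T : Matrix Φ Φ ℂ
  N : Φ → Φ → Φ → ℕ
  S_unitary : S * S.conjTranspose = 1
  S_symm : ∀ a b, S a b = S b a
  T_diag : ∀ a b, a ≠ b → T a b = 0
  T_order : ∃ m : ℕ, 0 < m ∧ T ^ m = 1
  S_zero_pos : ∀ a, (S zero a).im = 0 ∧ 0 < (S zero a).re
  modular_rel : S ^ 2 = (S * T) ^ 3
  verlinde : ∀ a b c,
    (N a b c : ℂ) = ∑ d, S a d * S b d * (starRingEnd ℂ) (S c d) / S zero d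

/-- A grading of modular data: a nowhere-zero function `φ : Φ → ℂ` with
`φ c = φ a · φ b` whenever `N a b c ≠ 0`. -/
def IsGrading {Φ : Type} [Fintype Φ] [DecidableEq Φ] (M : ModularData Φ) (φ : Φ → ℂ) : Prop :=
  (∀ b, φ b ≠ 0) ∧ ∀ a b c, M.N a b c ≠ 0 → φ c = φ a * φ b

namespace ModularData

variable {Φ : Type} [Fintype Φ] [DecidableEq Φ] (M : ModularData Φ)

lemma row_orth (a b : Φ) :
    ∑ d, M.S a d * (starRingEnd ℂ) (M.S b d) = if a = b then 1 else 0 := by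
  have h := congrFun (congrFun M.S_unitary a) b
  rw [Matrix.mul_apply, Matrix.one_apply] at h
  simpa [Matrix.conjTranspose_apply] using h

lemma col_orth (d e : Φ) :
    ∑ c, (starRingEnd ℂ) (M.S c d) * M.S c e = if d = e then 1 else 0 := by
  have h0 : M.S.conjTranspose * M.S = 1 := mul_eq_one_comm.mp M.S_unitary
  have h := congrFun (congrFun h0 d) e
  rw [Matrix.mul_apply, Matrix.one_apply] at h
  simpa [Matrix.conjTranspose_apply] using h

/-- The positive real entries of the zero row. -/
noncomputable def s (a : Φ) : ℝ := (M.S M.zero a).re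

lemma s_pos (a : Φ) : 0 < M.s a := (M.S_zero_pos a).2

lemma S_zero (a : Φ) : M.S M.zero a = (M.s a : ℂ) := by
  apply Complex.ext
  · simp [s]
  · simp [(M.S_zero_pos a).1]

lemma S_zero' (a : Φ) : M.S a M.zero = (M.s a : ℂ) := by
  rw [M.S_symm, S_zero]

lemma s_ne (a : Φ) : (M.s a : ℂ) ≠ 0 := by
  exact_mod_cast (M.s_pos a).ne'

lemma norm_sum (a : Φ) : ∑ d, ‖M.S a d‖ ^ 2 = 1 := by
  have h := M.row_orth a a
  simp only [if_true, Complex.mul_conj, Complex.normSq_eq_norm_sq] at h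
  exact_mod_cast h

lemma char_eq (a b e : Φ) :
    ∑ c, (M.N a b c : ℂ) * M.S c e = M.S a e * M.S b e / M.s e := by
  simp only [M.verlinde, Finset.sum_mul]
  rw [Finset.sum_comm]
  have : ∀ d, ∑ c, M.S a d * M.S b d * (starRingEnd ℂ) (M.S c d) / M.S M.zero d * M.S c e
      = M.S a d * M.S b d / M.S M.zero d * (if d = e then 1 else 0) := by
    intro d
    rw [← M.col_orth d e, Finset.mul_sum]
    refine Finset.sum_congr rfl fun c _ => ?_
    ring
  simp only [this]
  simp [S_zero]

lemma char_eq_real (a b : Φ) :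
    ∑ c, (M.N a b c : ℝ) * M.s c = M.s a * M.s b / M.s M.zero := by
  have h := M.char_eq a b M.zero
  simp only [S_zero'] at h
  exact_mod_cast h

lemma bound (a d : Φ) : ‖M.S a d‖ * M.s M.zero ≤ M.s a * M.s d := by
  obtain ⟨b, -, hb⟩ := Finset.exists_max_image Finset.univ (fun b => ‖M.S b d‖ / M.s b)
    ⟨M.zero, Finset.mem_univ _⟩
  set m := ‖M.S b d‖ / M.s b with hm
  have hbm : ‖M.S b d‖ = m * M.s b := by rw [hm, div_mul_cancel₀ _ (M.s_pos b).ne']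
  have hle : ∀ c, ‖M.S c d‖ ≤ m * M.s c := fun c => by
    have := hb c (Finset.mem_univ _)
    rwa [div_le_iff₀ (M.s_pos c)] at this
  have hmpos : 0 < m := by
    have h1 := hle M.zero
    rw [S_zero, Complex.norm_real, Real.norm_of_nonneg (M.s_pos d).le] at h1
    have h2 := M.s_pos d
    have h3 := M.s_pos M.zero
    by_contra h
    nlinarith
  clear_value m
  have hc := M.char_eq a b d
  have hn : ‖M.S a d‖ * ‖M.S b d‖ / M.s d ≤ m * (M.s a * M.s b / M.s M.zero) := by
    have : ‖M.S a d * M.S b d / M.s d‖ = ‖M.S a d‖ * ‖M.S b d‖ / M.s d := by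
      rw [norm_div, norm_mul, Complex.norm_real, Real.norm_of_nonneg (M.s_pos d).le]
    rw [← this, ← hc, ← M.char_eq_real, Finset.mul_sum]
    refine (norm_sum_le _ _).trans (Finset.sum_le_sum fun c _ => ?_)
    rw [norm_mul, Complex.norm_natCast]
    have := mul_le_mul_of_nonneg_left (hle c) (Nat.cast_nonneg (α := ℝ) (M.N a b c))
    linarith
  rw [hbm, div_le_iff₀ (M.s_pos d), ← mul_div_assoc, div_mul_eq_mul_div,
    le_div_iff₀ (M.s_pos _)] at hn
  have hp : 0 < m * M.s b := mul_pos hmpos (M.s_pos b)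
  refine le_of_mul_le_mul_right ?_ hp
  linarith

lemma unit_norm (j : Φ) (hj : M.s j = M.s M.zero) (d : Φ) : ‖M.S j d‖ = M.s d := by
  have hle : ∀ d, ‖M.S j d‖ ≤ M.s d := fun d => by
    have := M.bound j d
    rw [hj, mul_comm] at this
    exact le_of_mul_le_mul_left this (M.s_pos _)
  have h0 : ∀ d, ‖M.S M.zero d‖ = M.s d := fun d => by
    rw [S_zero, Complex.norm_real, Real.norm_of_nonneg (M.s_pos d).le]
  have hs : ∑ d, ‖M.S j d‖ ^ 2 = ∑ d, M.s d ^ 2 := by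
    rw [norm_sum, ← M.norm_sum M.zero]
    simp [h0]
  have := (Finset.sum_eq_sum_iff_of_le (fun d _ =>
    pow_le_pow_left₀ (norm_nonneg _) (hle d) 2)).mp hs d (Finset.mem_univ _)
  exact (pow_left_inj₀ (norm_nonneg _) (M.s_pos d).le two_ne_zero).mp this

lemma unit_grading (j : Φ) (hj : M.s j = M.s M.zero) :
    IsGrading M (fun b => M.S j b / M.S M.zero b) := by
  set φ : Φ → ℂ := fun b => M.S j b / M.S M.zero b with hφ
  have hn : ∀ b, ‖φ b‖ = 1 := fun b => by
    simp only [hφ]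
    rw [norm_div, S_zero, Complex.norm_real, Real.norm_of_nonneg (M.s_pos b).le,
      M.unit_norm j hj, div_self (M.s_pos b).ne']
  have hS : ∀ b, M.S b j = φ b * M.s b := fun b => by
    simp only [hφ]
    rw [S_zero, div_mul_cancel₀ _ (M.s_ne b), M.S_symm]
  refine ⟨fun b hb => by simpa [hb] using hn b, fun a b c hN => ?_⟩
  have hp : ‖φ a * φ b‖ = 1 := by rw [norm_mul, hn, hn, one_mul]
  set p := φ a * φ b with hpd
  have hpp : p * (starRingEnd ℂ) p = 1 := by
    rw [Complex.mul_conj, Complex.normSq_eq_norm_sq, hp]; simp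
  have h1 : ∑ c, (M.N a b c : ℂ) * (φ c * M.s c) = p * (M.s a * M.s b / M.s M.zero) := by
    have := M.char_eq a b j
    simp only [hS, hj] at this
    rw [this, hpd]; ring
  have h2 : ∑ c, ((M.N a b c : ℝ) * M.s c) * (φ c * (starRingEnd ℂ) p).re
      = M.s a * M.s b / M.s M.zero := by
    have h3 : ∑ c, (((M.N a b c : ℝ) * M.s c : ℝ) : ℂ) * (φ c * (starRingEnd ℂ) p)
      = ((M.s a * M.s b / M.s M.zero : ℝ) : ℂ) := by
      calc _ = (∑ c, (M.N a b c : ℂ) * (φ c * M.s c)) * (starRingEnd ℂ) p := by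
            rw [Finset.sum_mul]
            refine Finset.sum_congr rfl fun c _ => ?_
            push_cast; ring
        _ = (p * (starRingEnd ℂ) p) * (M.s a * M.s b / M.s M.zero) := by rw [h1]; ring
        _ = _ := by rw [hpp]; push_cast; ring
    have h4 := congrArg Complex.re h3
    rw [Complex.re_sum, Complex.ofReal_re] at h4
    simpa only [Complex.re_ofReal_mul] using h4
  have hnc : ∀ c, ‖φ c * (starRingEnd ℂ) p‖ = 1 := fun c => by
    rw [norm_mul, hn, RCLike.norm_conj, hp, one_mul]
  have hre : ∀ c, (φ c * (starRingEnd ℂ) p).re ≤ 1 := fun c => by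
    rw [← hnc c]; exact Complex.re_le_norm _
  rw [← M.char_eq_real] at h2
  have h5 := (Finset.sum_eq_sum_iff_of_le (fun c _ => by
    have : 0 ≤ (M.N a b c : ℝ) * M.s c := mul_nonneg (Nat.cast_nonneg _) (M.s_pos c).le
    exact mul_le_of_le_one_right this (hre c))).mp h2 c (Finset.mem_univ _)
  have hne : (M.N a b c : ℝ) * M.s c ≠ 0 :=
    mul_ne_zero (Nat.cast_ne_zero.mpr hN) (M.s_pos c).ne'
  have h6 : (φ c * (starRingEnd ℂ) p).re = 1 := mul_left_cancel₀ hne (by rw [h5, mul_one])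
  have h7 : φ c * (starRingEnd ℂ) p = 1 := by
    have h8 := Complex.normSq_eq_norm_sq (φ c * (starRingEnd ℂ) p)
    rw [hnc c, Complex.normSq_apply, h6] at h8
    apply Complex.ext
    · exact h6
    · rw [Complex.one_im]; nlinarith
  calc φ c = φ c * (p * (starRingEnd ℂ) p) := by rw [hpp, mul_one]
    _ = (φ c * (starRingEnd ℂ) p) * p := by ring
    _ = p := by rw [h7, one_mul]

/-- Every nonzero character of the fusion ring is given by a column of `S`. -/
lemma character (ψ : Φ → ℂ) (c₀ : Φ) (h0 : ψ c₀ ≠ 0)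
    (hψ : ∀ a b, ψ a * ψ b = ∑ c, (M.N a b c : ℂ) * ψ c) :
    ∃ e, ∀ a, ψ a = M.S a e / M.s e := by
  set v : Φ → ℂ := fun e => ∑ c, (starRingEnd ℂ) (M.S c e) * ψ c with hv
  have hrec : ∀ c, ψ c = ∑ e, M.S c e * v e := by
    intro c
    simp only [hv, Finset.mul_sum]
    rw [Finset.sum_comm]
    simp_rw [← mul_assoc, ← Finset.sum_mul, M.row_orth]
    simp
  obtain ⟨e, he⟩ : ∃ e, v e ≠ 0 := by
    by_contra! h
    exact h0 (by rw [hrec]; simp [h])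
  refine ⟨e, fun a => mul_right_cancel₀ he ?_⟩
  have h1 : ∀ b, ψ a * ψ b = ∑ d, M.S a d * M.S b d / M.s d * v d := by
    intro b
    rw [hψ]
    simp only [M.verlinde, Finset.sum_mul, hv, Finset.mul_sum]
    rw [Finset.sum_comm]
    refine Finset.sum_congr rfl fun d _ => Finset.sum_congr rfl fun c _ => ?_
    rw [S_zero]; ring
  calc ψ a * v e = ∑ b, (starRingEnd ℂ) (M.S b e) * (ψ a * ψ b) := by
        simp only [hv, Finset.mul_sum]
        exact Finset.sum_congr rfl fun c _ => by ring
    _ = ∑ d, (∑ b, (starRingEnd ℂ) (M.S b e) * M.S b d) * (M.S a d / M.s d * v d) := by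
        simp only [h1, Finset.mul_sum, Finset.sum_mul]
        rw [Finset.sum_comm]
        exact Finset.sum_congr rfl fun d _ => Finset.sum_congr rfl fun c _ => by ring
    _ = _ := by simp [M.col_orth]

lemma grading_char (φ : Φ → ℂ) (h : IsGrading M φ) :
    ∃ e, ∀ a, φ a * M.s a / M.s M.zero = M.S a e / M.s e := by
  refine M.character (fun a => φ a * M.s a / M.s M.zero) M.zero
    (div_ne_zero (mul_ne_zero (h.1 _) (M.s_ne _)) (M.s_ne _)) fun a b => ?_
  have h1 : ∀ c, (M.N a b c : ℂ) * (φ c * M.s c / M.s M.zero)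
      = φ a * φ b / M.s M.zero * ((M.N a b c : ℂ) * M.S c M.zero) := by
    intro c
    rw [S_zero']
    by_cases hN : M.N a b c = 0
    · simp [hN]
    · rw [h.2 a b c hN]; ring
  simp only [h1]
  rw [← Finset.mul_sum, M.char_eq, S_zero', S_zero']
  ring

lemma grading_norm_le (φ : Φ → ℂ) (h : IsGrading M φ) (a : Φ) : ‖φ a‖ ≤ 1 := by
  obtain ⟨e, he⟩ := M.grading_char φ h
  have h1 := congrArg norm (he a)
  simp only [norm_div, norm_mul, Complex.norm_real,
    Real.norm_of_nonneg (M.s_pos _).le] at h1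
  have h2 := M.bound a e
  have ha := M.s_pos a
  have h0 := M.s_pos M.zero
  have hse := M.s_pos e
  rw [div_eq_div_iff h0.ne' hse.ne'] at h1
  rw [← h1] at h2
  have : ‖φ a‖ * (M.s a * M.s e) ≤ 1 * (M.s a * M.s e) := by linarith
  exact le_of_mul_le_mul_right this (mul_pos ha hse)

lemma grading_norm (φ : Φ → ℂ) (h : IsGrading M φ) (a : Φ) : ‖φ a‖ = 1 := by
  refine le_antisymm (M.grading_norm_le φ h a) ?_
  have h' : IsGrading M (fun b => (φ b)⁻¹) :=
    ⟨fun b => inv_ne_zero (h.1 b), fun a b c hN => by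
      simp only [h.2 a b c hN, mul_inv]⟩
  have h1 := M.grading_norm_le _ h' a
  simp only [norm_inv] at h1
  exact (inv_le_one₀ (norm_pos_iff.mpr (h.1 a))).mp h1

lemma grading_unit (φ : Φ → ℂ) (h : IsGrading M φ) :
    ∃ j, M.s j = M.s M.zero ∧ ∀ b, φ b = M.S j b / M.S M.zero b := by
  obtain ⟨e, he⟩ := M.grading_char φ h
  have h0 := M.s_pos M.zero
  have hse := M.s_pos e
  have h1 : ∀ a, ‖M.S e a‖ = M.s a * (M.s e / M.s M.zero) := fun a => by
    have h1 := congrArg norm (he a)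
    simp only [norm_div, norm_mul, Complex.norm_real,
      Real.norm_of_nonneg (M.s_pos _).le, M.grading_norm φ h, one_mul] at h1
    rw [M.S_symm]
    field_simp at h1 ⊢
    linarith
  have hz : ∀ d, ‖M.S M.zero d‖ = M.s d := fun d => by
    rw [S_zero, Complex.norm_real, Real.norm_of_nonneg (M.s_pos d).le]
  have hs := M.norm_sum e
  have hs0 := M.norm_sum M.zero
  simp only [hz] at hs0
  simp only [h1, mul_pow] at hs
  rw [← Finset.sum_mul, hs0, one_mul] at hs
  have hq : M.s e / M.s M.zero = 1 :=
    (pow_eq_one_iff_of_nonneg (div_pos hse h0).le two_ne_zero).mp hs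
  have hj : M.s e = M.s M.zero := by rwa [div_eq_one_iff_eq h0.ne'] at hq
  refine ⟨e, hj, fun b => ?_⟩
  have h2 := he b
  rw [hj, div_left_inj' (M.s_ne _)] at h2
  rw [S_zero, eq_div_iff (M.s_ne b), h2, M.S_symm]

end ModularData

/-- For every unit `j` (`S_{j0} = S_{00}`) the phase `b ↦ S_{jb}/S_{0b}` is
a grading, and conversely every grading arises from a unique unit in this way. -/
theorem modularData_gradings_are_units
    {Φ : Type} [Fintype Φ] [DecidableEq Φ] (M : ModularData Φ) :
    (∀ j : Φ, M.S j M.zero = M.S M.zero M.zero →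
      IsGrading M (fun b => M.S j b / M.S M.zero b)) ∧
    (∀ φ : Φ → ℂ, IsGrading M φ →
      ∃! j : Φ, M.S j M.zero = M.S M.zero M.zero ∧
        ∀ b, φ b = M.S j b / M.S M.zero b) := by
  refine ⟨fun j hj => M.unit_grading j ?_, fun φ h => ?_⟩
  · rw [M.S_zero', M.S_zero'] at hj
    exact_mod_cast hj
  · obtain ⟨j, hj, hb⟩ := M.grading_unit φ h
    refine ⟨j, ⟨by rw [M.S_zero', M.S_zero', hj], hb⟩, ?_⟩
    rintro k ⟨-, hk⟩
    have hrow : ∀ b, M.S k b = M.S j b := fun b => by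
      have := (hk b).symm.trans (hb b)
      rw [M.S_zero] at this
      exact (div_left_inj' (M.s_ne b)).mp this
    by_contra hne
    have h1 := M.row_orth k j
    have h2 := M.row_orth j j
    simp only [hrow, if_neg hne] at h1
    rw [h1] at h2
    simp at h2
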